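/- arXiv:1506.02244 — 5 statements merged into one kernel-verified Lean document; each statement's English description precedes it below -/
import Mathlib

section
/- Let H and K be real Hilbert spaces, let T : H → H be a continuous linear operator that is symmetric and coercive (hence bijective with symmetric coercive inverse T⁻¹), and let η : K → H be a continuous linear map that is bounded below (there exists m > 0 with ‖η x‖ ≥ m‖x‖ for all x ∈ K). Set Tᵖ := η* ∘ T ∘ η and Sᵖ := η* ∘ T⁻¹ ∘ η, both of which are symmetric, coercive, continuous and bijective. Then Tᵖ and (Sᵖ)⁻¹ are spectrally equivalent: there exist constants c₁, c₂ > 0 such that c₁·⟨(Sᵖ)⁻¹x, x⟩ ≤ ⟨Tᵖx, x⟩ ≤ c₂·⟨(Sᵖ)⁻¹x, x⟩ for all x ∈ K. (This is the paper's claim that (Sᵖ)⁻¹ is 'usually not Tᵖ, although spectrally equivalent'.) -/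
open scoped RealInnerProductSpace

section Coercive

variable {E F : Type*} [NormedAddCommGroup E] [InnerProductSpace ℝ E]
  [NormedAddCommGroup F] [InnerProductSpace ℝ F]

/-- A right inverse of a coercive bounded operator is coercive. -/
lemma exists_coercive_of_rightInverse {A B : E →L[ℝ] E}
    (hA : ∃ c > 0, ∀ x, c * ‖x‖ ^ 2 ≤ ⟪A x, x⟫) (hAB : ∀ x, A (B x) = x) :
    ∃ c > 0, ∀ x, c * ‖x‖ ^ 2 ≤ ⟪B x, x⟫ := by
  obtain ⟨c, hc, hA⟩ := hA
  have hM : 0 < ‖A‖ + 1 := by positivity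
  refine ⟨c / (‖A‖ + 1) ^ 2, by positivity, fun x => ?_⟩
  have hx : ‖x‖ ≤ (‖A‖ + 1) * ‖B x‖ := by
    calc ‖x‖ = ‖A (B x)‖ := by rw [hAB]
      _ ≤ ‖A‖ * ‖B x‖ := A.le_opNorm _
      _ ≤ (‖A‖ + 1) * ‖B x‖ := by gcongr; linarith
  calc c / (‖A‖ + 1) ^ 2 * ‖x‖ ^ 2
      ≤ c / (‖A‖ + 1) ^ 2 * ((‖A‖ + 1) * ‖B x‖) ^ 2 := by gcongr
    _ = c * ‖B x‖ ^ 2 := by field_simp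
    _ ≤ ⟪A (B x), B x⟫ := hA (B x)
    _ = ⟪B x, x⟫ := by rw [hAB, real_inner_comm]

/-- The compression of a coercive operator along a map bounded below is coercive. -/
lemma exists_coercive_adjoint_comp_comp [CompleteSpace E] [CompleteSpace F]
    {A : E →L[ℝ] E} {η : F →L[ℝ] E} {m : ℝ}
    (hA : ∃ c > 0, ∀ x, c * ‖x‖ ^ 2 ≤ ⟪A x, x⟫) (hm : 0 < m) (hη : ∀ x, m * ‖x‖ ≤ ‖η x‖) :
    ∃ c > 0, ∀ x, c * ‖x‖ ^ 2 ≤ ⟪((ContinuousLinearMap.adjoint η).comp (A.comp η)) x, x⟫ := by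
  obtain ⟨c, hc, hA⟩ := hA
  refine ⟨c * m ^ 2, by positivity, fun x => ?_⟩
  calc c * m ^ 2 * ‖x‖ ^ 2 = c * (m * ‖x‖) ^ 2 := by ring
    _ ≤ c * ‖η x‖ ^ 2 := by gcongr; exact hη x
    _ ≤ ⟪A (η x), η x⟫ := hA (η x)
    _ = _ := (ContinuousLinearMap.adjoint_inner_left η x (A (η x))).symm

/-- The quadratic form of a bounded operator is dominated by that of a coercive one. -/
lemma exists_mul_inner_le_of_coercive (A : E →L[ℝ] E) {B : E →L[ℝ] E}
    (hB : ∃ c > 0, ∀ x, c * ‖x‖ ^ 2 ≤ ⟪B x, x⟫) :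
    ∃ C > 0, ∀ x, ⟪A x, x⟫ ≤ C * ⟪B x, x⟫ := by
  obtain ⟨c, hc, hB⟩ := hB
  refine ⟨(‖A‖ + 1) / c, by positivity, fun x => ?_⟩
  calc ⟪A x, x⟫ ≤ ‖A x‖ * ‖x‖ := real_inner_le_norm _ _
    _ ≤ ‖A‖ * ‖x‖ * ‖x‖ := by gcongr; exact A.le_opNorm x
    _ ≤ (‖A‖ + 1) * ‖x‖ * ‖x‖ := by gcongr; linarith
    _ = (‖A‖ + 1) / c * (c * ‖x‖ ^ 2) := by field_simp
    _ ≤ (‖A‖ + 1) / c * ⟪B x, x⟫ := by gcongr; exact hB x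

end Coercive

/-- With `T` symmetric coercive (hence invertible, with inverse `S`),
`η` bounded below, `Tᵖ = η* ∘ T ∘ η` and `Sᵖ = η* ∘ S ∘ η` (the latter being
symmetric, coercive and bijective, with inverse `R = (Sᵖ)⁻¹`), the operators `Tᵖ`
and `(Sᵖ)⁻¹` are spectrally equivalent. -/
theorem projected_DtN_spectrally_equivalent_inverse_projected_NtD
    {H K : Type*} [NormedAddCommGroup H] [InnerProductSpace ℝ H] [CompleteSpace H]
    [NormedAddCommGroup K] [InnerProductSpace ℝ K] [CompleteSpace K]
    (T : H →L[ℝ] H)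
    (hsymm : ∀ x y : H, ⟪T x, y⟫ = ⟪x, T y⟫)
    (c : ℝ) (hc : 0 < c)
    (hcoer : ∀ x : H, ⟪T x, x⟫ ≥ c * ‖x‖ ^ 2)
    (η : K →L[ℝ] H)
    (m : ℝ) (hm : 0 < m)
    (hη : ∀ x : K, ‖η x‖ ≥ m * ‖x‖)
    -- `S = T⁻¹`, the (symmetric, coercive) inverse of `T`:
    (S : H →L[ℝ] H)
    (hS : ∀ x : H, S (T x) = x ∧ T (S x) = x)
    -- `R = (Sᵖ)⁻¹`, the inverse of the projected operator `Sᵖ = η* ∘ S ∘ η`: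
    (R : K →L[ℝ] K)
    (hR : ∀ x : K,
        R (((ContinuousLinearMap.adjoint η).comp (S.comp η)) x) = x ∧
        ((ContinuousLinearMap.adjoint η).comp (S.comp η)) (R x) = x) :
    ∃ c₁ c₂ : ℝ, 0 < c₁ ∧ 0 < c₂ ∧
      ∀ x : K,
        c₁ * ⟪R x, x⟫ ≤ ⟪((ContinuousLinearMap.adjoint η).comp (T.comp η)) x, x⟫ ∧
        ⟪((ContinuousLinearMap.adjoint η).comp (T.comp η)) x, x⟫ ≤ c₂ * ⟪R x, x⟫ := by
  have hT : ∃ c > 0, ∀ x, c * ‖x‖ ^ 2 ≤ ⟪T x, x⟫ := ⟨c, hc, hcoer⟩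
  have hSp := exists_coercive_adjoint_comp_comp
    (exists_coercive_of_rightInverse hT fun x => (hS x).2) hm hη
  obtain ⟨C₁, hC₁, h₁⟩ :=
    exists_mul_inner_le_of_coercive R (exists_coercive_adjoint_comp_comp hT hm hη)
  obtain ⟨C₂, hC₂, h₂⟩ := exists_mul_inner_le_of_coercive
    ((ContinuousLinearMap.adjoint η).comp (T.comp η))
    (exists_coercive_of_rightInverse hSp fun x => (hR x).2)
  exact ⟨C₁⁻¹, C₂, inv_pos.2 hC₁, hC₂, fun x => ⟨(inv_mul_le_iff₀ hC₁).2 (h₁ x), h₂ x⟩⟩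
end

section
/- In the Lax–Milgram setup (H, K real Hilbert spaces, a : H × H → ℝ continuous symmetric coercive bilinear form, B : H → K surjective continuous linear map, U_w ∈ H the unique solution of a(U_w, V) = ⟨w, B V⟩ for all V ∈ H), the map Sᵖ : K → K, Sᵖw := B U_w, is a well-defined continuous linear operator which is symmetric (⟨Sᵖw, z⟩ = ⟨w, Sᵖz⟩ for all w, z ∈ K), coercive, and bijective. (This is the abstract form of the paper's projected Neumann-to-Dirichlet map Sᵖ = η⊤ ∘ γ₀ ∘ E_N ∘ η built from the elasticity bilinear form a and the trace map.) -/
open scoped RealInnerProductSpace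

/-- A continuous linear operator on a real Hilbert space which is bounded below by a positive
multiple of the identity is bijective. -/
theorem ContinuousLinearMap.bijective_of_forall_inner_ge
    {K : Type*} [NormedAddCommGroup K] [InnerProductSpace ℝ K] [CompleteSpace K]
    (S : K →L[ℝ] K) {c : ℝ} (hc : 0 < c) (hS : ∀ w : K, ⟪S w, w⟫ ≥ c * ‖w‖ ^ 2) :
    Function.Bijective S := by
  have hco : IsCoercive ((innerSL ℝ).comp S : K →L[ℝ] K →L[ℝ] ℝ) :=
    ⟨c, hc, fun w => by simpa [pow_two, mul_assoc] using hS w⟩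
  have hEq : ⇑S = hco.continuousLinearEquivOfBilin :=
    funext fun w => hco.unique_continuousLinearEquivOfBilin fun v => by simp
  rw [hEq]
  exact hco.continuousLinearEquivOfBilin.bijective

/-- In the Lax–Milgram setup (`a` a continuous symmetric coercive
bilinear form on the real Hilbert space `H`, `B : H → K` a surjective continuous
linear map, `E w` the unique solution of `a(E w, V) = ⟪w, B V⟫` for all `V`), the
map `Sᵖ : K → K`, `Sᵖ w = B (E w)`, is a well-defined continuous linear operator
which is symmetric, coercive and bijective. -/
theorem neumann_to_dirichlet_operator_continuous_symmetric_coercive_bijective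
    {H K : Type*} [NormedAddCommGroup H] [InnerProductSpace ℝ H] [CompleteSpace H]
    [NormedAddCommGroup K] [InnerProductSpace ℝ K] [CompleteSpace K]
    (a : H →ₗ[ℝ] H →ₗ[ℝ] ℝ)
    (hcont : ∃ C : ℝ, ∀ x y : H, |a x y| ≤ C * ‖x‖ * ‖y‖)
    (hsymm : ∀ x y : H, a x y = a y x)
    (c : ℝ) (hc : 0 < c)
    (hcoer : ∀ x : H, a x x ≥ c * ‖x‖ ^ 2)
    (B : H →L[ℝ] K) (hB : Function.Surjective B)
    (E : K → H)
    (hE : ∀ w : K, ∀ V : H, a (E w) V = ⟪w, B V⟫)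
    (hEuniq : ∀ (w : K) (U : H), (∀ V : H, a U V = ⟪w, B V⟫) → U = E w) :
    ∃ Sp : K →L[ℝ] K,
      (∀ w : K, Sp w = B (E w)) ∧
      (∀ w z : K, ⟪Sp w, z⟫ = ⟪w, Sp z⟫) ∧
      (∃ c' : ℝ, 0 < c' ∧ ∀ w : K, ⟪Sp w, w⟫ ≥ c' * ‖w‖ ^ 2) ∧
      Function.Bijective Sp := by
  -- the solution map is linear by uniqueness and bounded by coercivity
  let L : K →ₗ[ℝ] H :=
    { toFun := E
      map_add' := fun w z => (hEuniq _ _ fun V => by simp [hE, inner_add_left]).symm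
      map_smul' := fun r w => (hEuniq _ _ fun V => by simp [hE, real_inner_smul_left]).symm }
  have hbound : ∀ w, ‖L w‖ ≤ (‖B‖ / c) * ‖w‖ := fun w => by
    change ‖E w‖ ≤ _
    rcases (norm_nonneg (E w)).eq_or_lt with h0 | hpos
    · rw [← h0]
      positivity
    have h : c * ‖E w‖ ^ 2 ≤ ‖w‖ * (‖B‖ * ‖E w‖) :=
      calc c * ‖E w‖ ^ 2 ≤ a (E w) (E w) := hcoer _
        _ = ⟪w, B (E w)⟫ := hE _ _
        _ ≤ ‖w‖ * ‖B (E w)‖ := real_inner_le_norm _ _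
        _ ≤ ‖w‖ * (‖B‖ * ‖E w‖) := by gcongr; exact B.le_opNorm _
    rw [div_mul_eq_mul_div, le_div_iff₀ hc]
    exact le_of_mul_le_mul_right (by linarith) hpos
  let S : K →L[ℝ] K := B.comp (L.mkContinuous _ hbound)
  have hS : ∀ w, S w = B (E w) := fun _ => rfl
  have hinner : ∀ w z, ⟪S w, z⟫ = a (E z) (E w) := fun w z => by
    rw [hS, real_inner_comm, hE]
  -- a bounded right inverse of `B` bounds the solution map from below
  obtain ⟨C, hC⟩ := hcont
  obtain ⟨M, hM, hpre⟩ := B.exists_preimage_norm_le hB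
  have hlower : ∀ w, ‖w‖ ≤ (|C| + 1) * M * ‖E w‖ := fun w => by
    rcases (norm_nonneg w).eq_or_lt with h0 | hpos
    · rw [← h0]
      positivity
    obtain ⟨V, hV, hVn⟩ := hpre w
    have h : ‖w‖ * ‖w‖ ≤ (|C| + 1) * ‖E w‖ * (M * ‖w‖) :=
      calc ‖w‖ * ‖w‖ = a (E w) V := by rw [hE, hV, real_inner_self_eq_norm_mul_norm]
        _ ≤ C * ‖E w‖ * ‖V‖ := (le_abs_self _).trans (hC _ _)
        _ ≤ (|C| + 1) * ‖E w‖ * (M * ‖w‖) := by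
          gcongr
          linarith [le_abs_self C]
    exact le_of_mul_le_mul_right (by linarith) hpos
  have hScoer : ∀ w, ⟪S w, w⟫ ≥ c / ((|C| + 1) * M) ^ 2 * ‖w‖ ^ 2 := fun w =>
    calc c / ((|C| + 1) * M) ^ 2 * ‖w‖ ^ 2
        ≤ c / ((|C| + 1) * M) ^ 2 * ((|C| + 1) * M * ‖E w‖) ^ 2 := by
          gcongr
          exact hlower w
      _ = c * ‖E w‖ ^ 2 := by field_simp
      _ ≤ ⟪S w, w⟫ := (hcoer _).trans_eq (hinner w w).symm
  have hpos : 0 < c / ((|C| + 1) * M) ^ 2 := by positivity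
  exact ⟨S, hS, fun w z => by rw [hinner, hsymm, ← hinner, real_inner_comm],
    ⟨_, hpos, hScoer⟩, S.bijective_of_forall_inner_ge hpos hScoer⟩
end

section
/- In the Lax–Milgram setup (H, K real Hilbert spaces, a : H × H → ℝ continuous symmetric coercive bilinear form, B : H → K surjective continuous linear map, U_w ∈ H the unique solution of a(U_w, V) = ⟨w, B V⟩ for all V ∈ H, Sᵖ : K → K given by Sᵖw := B U_w, which is symmetric, coercive and bijective), define the scalar product g^S(α, β) := ⟨α, (Sᵖ)⁻¹β⟩ on K. Then for all w ∈ K and all V ∈ H one has g^S(B U_w, B V) = a(U_w, V). (This is the paper's key identity g^S(u, v) = DJ_Γ[V] = DJ_Ω[V] = a(U, V) connecting the boundary metric g^S with the domain bilinear form and underpinning the domain-based quasi-Newton method.) -/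
open scoped RealInnerProductSpace

/-- In the Lax–Milgram setup, with `Sᵖ w = B (E w)` the (symmetric,
coercive, bijective) Neumann-to-Dirichlet operator with continuous inverse `R`, the
scalar product `g^S(α, β) := ⟪α, R β⟫` satisfies the key identity
`g^S(B (E w), B V) = a (E w) V` for all `w ∈ K` and `V ∈ H`. -/
theorem steklov_metric_equals_domain_bilinear_form
    {H K : Type*} [NormedAddCommGroup H] [InnerProductSpace ℝ H] [CompleteSpace H]
    [NormedAddCommGroup K] [InnerProductSpace ℝ K] [CompleteSpace K]
    (a : H →ₗ[ℝ] H →ₗ[ℝ] ℝ)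
    (hcont : ∃ C : ℝ, ∀ x y : H, |a x y| ≤ C * ‖x‖ * ‖y‖)
    (hsymm : ∀ x y : H, a x y = a y x)
    (c : ℝ) (hc : 0 < c)
    (hcoer : ∀ x : H, a x x ≥ c * ‖x‖ ^ 2)
    (B : H →L[ℝ] K) (hB : Function.Surjective B)
    (E : K → H)
    (hE : ∀ w : K, ∀ V : H, a (E w) V = ⟪w, B V⟫)
    (hEuniq : ∀ (w : K) (U : H), (∀ V : H, a U V = ⟪w, B V⟫) → U = E w)
    -- `Sᵖ`, the Neumann-to-Dirichlet operator `w ↦ B (E w)`: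
    (Sp : K →L[ℝ] K) (hSp : ∀ w : K, Sp w = B (E w))
    -- `R = (Sᵖ)⁻¹`, the continuous inverse of `Sᵖ`:
    (R : K →L[ℝ] K)
    (hR : ∀ x : K, R (Sp x) = x ∧ Sp (R x) = x) :
    ∀ (w : K) (V : H), ⟪B (E w), R (B V)⟫ = a (E w) V := by
  intro w V
  rw [real_inner_comm, ← hE, hsymm, hE, ← hSp, (hR _).2, hE]
end

section
/- In the Lax–Milgram setup (H, K real Hilbert spaces, a : H × H → ℝ continuous symmetric coercive bilinear form, B : H → K surjective continuous linear map), let E_D : K → H denote the Dirichlet solution operator assigning to u ∈ K the unique U ∈ H with B U = u and a(U, V) = 0 for all V ∈ ker B, and let Sᵖ : K → K, Sᵖw := B U_w, be the Neumann-to-Dirichlet operator, where U_w solves a(U_w, V) = ⟨w, B V⟩ for all V ∈ H. Then: (i) for every u ∈ K there is a unique element T u ∈ K satisfying a(E_D u, V) = ⟨T u, B V⟩ for all V ∈ H, and the resulting Dirichlet-to-Neumann map T : K → K is linear; (ii) T ∘ Sᵖ = id_K and Sᵖ ∘ T = id_K, i.e., the Dirichlet-to-Neumann map is the inverse of the Neumann-to-Dirichlet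 map, T = S⁻¹. (Abstract form of the paper's generalization of Khoromskij–Wittum, theorem 2.3.1, from scalar fields to vector fields.) -/
open scoped RealInnerProductSpace

/-- A continuous linear functional that vanishes on the kernel of a surjective continuous
linear map `B` between Hilbert spaces is of the form `V ↦ ⟪t, B V⟫`. -/
theorem exists_eq_inner_of_vanish_on_ker
    {H K : Type*} [NormedAddCommGroup H] [InnerProductSpace ℝ H] [CompleteSpace H]
    [NormedAddCommGroup K] [InnerProductSpace ℝ K] [CompleteSpace K]
    (B : H →L[ℝ] K) (hB : Function.Surjective B) (f : H →L[ℝ] ℝ)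
    (hf : ∀ V : H, B V = 0 → f V = 0) :
    ∃ t : K, ∀ V : H, f V = ⟪t, B V⟫ := by
  obtain ⟨C, -, hC⟩ := B.exists_preimage_norm_le hB
  choose s hs hsC using hC
  have hfs : ∀ V W : H, B V = B W → f V = f W := fun V W h => by
    rw [← sub_eq_zero, ← map_sub]
    exact hf _ (by rw [map_sub, h, sub_self])
  let g : K →ₗ[ℝ] ℝ :=
    { toFun := fun y => f (s y)
      map_add' := fun x y => by
        rw [← map_add]
        exact hfs _ _ (by simp only [map_add, hs])
      map_smul' := fun r x => by
        rw [RingHom.id_apply, ← map_smul]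
        exact hfs _ _ (by simp only [map_smul, hs]) }
  have hg : ∀ y, ‖g y‖ ≤ (‖f‖ * C) * ‖y‖ := fun y =>
    calc ‖f (s y)‖ ≤ ‖f‖ * ‖s y‖ := f.le_opNorm _
      _ ≤ ‖f‖ * (C * ‖y‖) := by gcongr; exact hsC y
      _ = (‖f‖ * C) * ‖y‖ := by ring
  refine ⟨(InnerProductSpace.toDual ℝ K).symm (g.mkContinuous _ hg), fun V => ?_⟩
  rw [InnerProductSpace.toDual_symm_apply]
  exact hfs _ _ (hs _).symm

/-- In the Lax–Milgram setup, with `ED` the Dirichlet solution operator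
and `Sᵖ w = B (E w)` the Neumann-to-Dirichlet operator: (i) for every `u` there is a
unique `t ∈ K` with `a (ED u) V = ⟪t, B V⟫` for all `V`, and the resulting
Dirichlet-to-Neumann map `T` is linear; (ii) `T ∘ Sᵖ = id` and `Sᵖ ∘ T = id`,
i.e. `T = S⁻¹`. -/
theorem dirichlet_to_neumann_is_inverse_of_neumann_to_dirichlet
    {H K : Type*} [NormedAddCommGroup H] [InnerProductSpace ℝ H] [CompleteSpace H]
    [NormedAddCommGroup K] [InnerProductSpace ℝ K] [CompleteSpace K]
    (a : H →ₗ[ℝ] H →ₗ[ℝ] ℝ)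
    (hcont : ∃ C : ℝ, ∀ x y : H, |a x y| ≤ C * ‖x‖ * ‖y‖)
    (hsymm : ∀ x y : H, a x y = a y x)
    (c : ℝ) (hc : 0 < c)
    (hcoer : ∀ x : H, a x x ≥ c * ‖x‖ ^ 2)
    (B : H →L[ℝ] K) (hB : Function.Surjective B)
    -- the Neumann solution operator `E = E_N`:
    (E : K → H)
    (hE : ∀ w : K, ∀ V : H, a (E w) V = ⟪w, B V⟫)
    (hEuniq : ∀ (w : K) (U : H), (∀ V : H, a U V = ⟪w, B V⟫) → U = E w)
    -- the Dirichlet solution operator `ED = E_D`: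
    (ED : K → H)
    (hED : ∀ u : K, B (ED u) = u ∧ ∀ V : H, B V = 0 → a (ED u) V = 0)
    (hEDuniq : ∀ (u : K) (U : H),
        (B U = u ∧ ∀ V : H, B V = 0 → a U V = 0) → U = ED u) :
    -- (i) well-posedness of the Dirichlet-to-Neumann map
    (∀ u : K, ∃! t : K, ∀ V : H, a (ED u) V = ⟪t, B V⟫) ∧
    -- the resulting Dirichlet-to-Neumann map is linear, and (ii) it inverts `Sᵖ`
    (∃ T : K →ₗ[ℝ] K,
      (∀ (u : K) (V : H), a (ED u) V = ⟪T u, B V⟫) ∧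
      (∀ w : K, T (B (E w)) = w) ∧
      (∀ u : K, B (E (T u)) = u)) := by
  have huniq : ∀ t t' : K, (∀ V : H, ⟪t, B V⟫ = ⟪t', B V⟫) → t = t' := fun t t' h =>
    ext_inner_right ℝ fun v => by
      obtain ⟨V, rfl⟩ := hB v
      exact h V
  have hex : ∀ u : K, ∃ t : K, ∀ V : H, a (ED u) V = ⟪t, B V⟫ := fun u => by
    obtain ⟨C, hC⟩ := hcont
    exact exists_eq_inner_of_vanish_on_ker B hB
      ((a (ED u)).mkContinuous (C * ‖ED u‖) fun V => hC (ED u) V) (hED u).2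
  have hED_add : ∀ u v : K, ED (u + v) = ED u + ED v := fun u v =>
    (hEDuniq _ _ ⟨by rw [map_add, (hED u).1, (hED v).1], fun V hV => by
      rw [map_add, LinearMap.add_apply, (hED u).2 V hV, (hED v).2 V hV, add_zero]⟩).symm
  have hED_smul : ∀ (r : ℝ) (u : K), ED (r • u) = r • ED u := fun r u =>
    (hEDuniq _ _ ⟨by rw [map_smul, (hED u).1], fun V hV => by
      rw [map_smul, LinearMap.smul_apply, (hED u).2 V hV, smul_zero]⟩).symm
  refine ⟨fun u => ?_, ?_⟩
  · obtain ⟨t, ht⟩ := hex u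
    exact ⟨t, ht, fun t' ht' => huniq _ _ fun V => by rw [← ht, ← ht']⟩
  choose T hT using hex
  refine ⟨
    { toFun := T
      map_add' := fun u v => huniq _ _ fun V => by
        rw [← hT, hED_add, map_add, LinearMap.add_apply, inner_add_left, hT, hT]
      map_smul' := fun r u => huniq _ _ fun V => by
        rw [← hT, hED_smul, map_smul, LinearMap.smul_apply, RingHom.id_apply,
          real_inner_smul_left, hT, smul_eq_mul] }, hT, fun w => ?_, fun u => ?_⟩
  · have hEw : E w = ED (B (E w)) :=
      hEDuniq _ _ ⟨rfl, fun V hV => by rw [hE, hV, inner_zero_right]⟩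
    exact huniq (T (B (E w))) w fun V => by rw [← hT, ← hEw, hE]
  · change B (E (T u)) = u
    rw [← hEuniq (T u) (ED u) (hT u), (hED u).1]
end

section
/- In the Lax–Milgram setup (H, K real Hilbert spaces, a : H × H → ℝ continuous symmetric coercive bilinear form, B : H → K surjective continuous linear map, U_w ∈ H the unique solution of a(U_w, V) = ⟨w, B V⟩ for all V ∈ H), let H_Γ := {U_w : w ∈ K} ⊆ H. Then: (i) H_Γ is a closed linear subspace of H; (ii) the a-orthogonal complement of H_Γ equals ker B, i.e., {V ∈ H : a(U, V) = 0 for all U ∈ H_Γ} = ker B; (iii) every U ∈ H admits a unique decomposition U = U₁ + U₂ with U₁ ∈ H_Γ and U₂ ∈ ker B, and this decomposition is a-orthogonal: a(U₁, U₂) = 0. (This is the paper's decomposition H¹₀(Ω, ℝᵈ) = H_Γint ⊕ H_Γint^⊥ used to show that the quasi-Newton iteration acts only on the coercive part of the shape Hessian.) -/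
open scoped RealInnerProductSpace

/-- A continuous linear operator `T` on a real Hilbert space with `⟪T w, w⟫ ≥ C ‖w‖²` for some
`C > 0` is surjective. -/
theorem surjective_of_inner_apply_self_coercive
    {K : Type*} [NormedAddCommGroup K] [InnerProductSpace ℝ K] [CompleteSpace K]
    (T : K →L[ℝ] K) {C : ℝ} (hC : 0 < C) (hT : ∀ w, C * ‖w‖ * ‖w‖ ≤ ⟪T w, w⟫) :
    Function.Surjective T := by
  have hco : IsCoercive ((innerSL ℝ).comp T) := ⟨C, hC, hT⟩
  intro z
  obtain ⟨w, rfl⟩ := hco.continuousLinearEquivOfBilin.surjective z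
  exact ⟨w, ext_inner_right ℝ fun v => (hco.continuousLinearEquivOfBilin_apply w v).symm⟩

/-- In the Lax–Milgram setup, the space `H_Γ = {E w : w ∈ K}` of
Neumann extensions is a closed linear subspace of `H`, its `a`-orthogonal complement
is `ker B`, and every `U ∈ H` has a unique (and `a`-orthogonal) decomposition
`U = U₁ + U₂` with `U₁ ∈ H_Γ` and `U₂ ∈ ker B`. -/
theorem neumann_extension_space_a_orthogonal_decomposition
    {H K : Type*} [NormedAddCommGroup H] [InnerProductSpace ℝ H] [CompleteSpace H]
    [NormedAddCommGroup K] [InnerProductSpace ℝ K] [CompleteSpace K]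
    (a : H →ₗ[ℝ] H →ₗ[ℝ] ℝ)
    (hcont : ∃ C : ℝ, ∀ x y : H, |a x y| ≤ C * ‖x‖ * ‖y‖)
    (hsymm : ∀ x y : H, a x y = a y x)
    (c : ℝ) (hc : 0 < c)
    (hcoer : ∀ x : H, a x x ≥ c * ‖x‖ ^ 2)
    (B : H →L[ℝ] K) (hB : Function.Surjective B)
    (E : K → H)
    (hE : ∀ w : K, ∀ V : H, a (E w) V = ⟪w, B V⟫)
    (hEuniq : ∀ (w : K) (U : H), (∀ V : H, a U V = ⟪w, B V⟫) → U = E w) :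
    -- (i) `H_Γ := range E` is a closed linear subspace of `H`
    (∃ M : Submodule ℝ H, (M : Set H) = Set.range E ∧ IsClosed (M : Set H)) ∧
    -- (ii) the `a`-orthogonal complement of `H_Γ` equals `ker B`
    ({V : H | ∀ U ∈ Set.range E, a U V = 0} = {V : H | B V = 0}) ∧
    -- (iii) unique decomposition, which is `a`-orthogonal
    (∀ U : H,
      (∃! p : H × H, p.1 ∈ Set.range E ∧ B p.2 = 0 ∧ U = p.1 + p.2) ∧
      (∀ p : H × H, p.1 ∈ Set.range E → B p.2 = 0 → U = p.1 + p.2 →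
        a p.1 p.2 = 0)) := by
  obtain ⟨C, hC⟩ := hcont
  have haB : ∀ w V, B V = 0 → a (E w) V = 0 := fun w V hV => by
    rw [hE, hV, inner_zero_right]
  have eq_zero : ∀ x, a x x = 0 → x = 0 := fun x hx => by
    have h := hcoer x
    rw [hx] at h
    have h0 : ‖x‖ ^ 2 = 0 := le_antisymm (by nlinarith) (sq_nonneg _)
    simpa using h0
  let L : K →ₗ[ℝ] H :=
    { toFun := E
      map_add' := fun w z => (hEuniq _ _ fun V => by
        rw [map_add, LinearMap.add_apply, hE, hE, inner_add_left]).symm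
      map_smul' := fun r w => (hEuniq _ _ fun V => by
        simp [hE, real_inner_smul_left]).symm }
  have hbound : ∀ w, ‖L w‖ ≤ ‖B‖ / c * ‖w‖ := fun w => by
    change ‖E w‖ ≤ _
    rcases (norm_nonneg (E w)).eq_or_lt with h | h
    · rw [← h]; positivity
    · have h1 : c * ‖E w‖ ^ 2 ≤ ‖w‖ * (‖B‖ * ‖E w‖) :=
        calc c * ‖E w‖ ^ 2 ≤ a (E w) (E w) := hcoer _
          _ = ⟪w, B (E w)⟫ := hE _ _
          _ ≤ ‖w‖ * ‖B (E w)‖ := real_inner_le_norm _ _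
          _ ≤ ‖w‖ * (‖B‖ * ‖E w‖) := by gcongr; exact B.le_opNorm _
      have h2 : c * ‖E w‖ ≤ ‖B‖ * ‖w‖ := le_of_mul_le_mul_right (by linarith) h
      rw [div_mul_eq_mul_div, le_div_iff₀ hc]
      linarith
  obtain ⟨D, hD, hpre⟩ := B.exists_preimage_norm_le hB
  have hlower : ∀ w, ‖w‖ ≤ (|C| + 1) * D * ‖E w‖ := fun w => by
    rcases (norm_nonneg w).eq_or_lt with h | h
    · rw [← h]; positivity
    · obtain ⟨V, hV, hVn⟩ := hpre w
      refine le_of_mul_le_mul_right ?_ h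
      calc ‖w‖ * ‖w‖ = a (E w) V := by rw [hE, hV, real_inner_self_eq_norm_mul_norm]
        _ ≤ C * ‖E w‖ * ‖V‖ := (le_abs_self _).trans (hC _ _)
        _ ≤ (|C| + 1) * ‖E w‖ * (D * ‖w‖) := by
            gcongr
            linarith [le_abs_self C]
        _ = (|C| + 1) * D * ‖E w‖ * ‖w‖ := by ring
  have hsurj : Function.Surjective (B.comp (L.mkContinuous _ hbound)) := by
    have hP : 0 < (|C| + 1) * D := by positivity
    refine surjective_of_inner_apply_self_coercive _
      (C := c / ((|C| + 1) * D) ^ 2) (by positivity) fun w => ?_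
    change _ ≤ ⟪B (E w), w⟫
    rw [real_inner_comm, ← hE]
    refine le_trans ?_ (hcoer (E w))
    rw [mul_assoc, ← sq, div_mul_eq_mul_div, div_le_iff₀ (by positivity), mul_assoc, ← mul_pow,
      mul_comm ‖E w‖]
    gcongr
    exact hlower w
  have hdecomp : ∀ U, ∃ w, B (U - E w) = 0 := fun U => by
    obtain ⟨w, hw⟩ := hsurj (B U)
    exact ⟨w, by rw [map_sub, sub_eq_zero]; exact hw.symm⟩
  have hrange : Set.range E = ⋂ V ∈ {V | B V = 0}, {U | a U V = 0} := by
    ext U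
    simp only [Set.mem_iInter, Set.mem_ofPred_eq]
    constructor
    · rintro ⟨w, rfl⟩ V hV
      exact haB w V hV
    · intro hU
      obtain ⟨w, hw⟩ := hdecomp U
      refine ⟨w, (sub_eq_zero.1 (eq_zero _ ?_)).symm⟩
      rw [LinearMap.map_sub₂, hU _ hw, haB _ _ hw, sub_zero]
  refine ⟨⟨LinearMap.range L, rfl, ?_⟩, ?_, fun U => ⟨?_, ?_⟩⟩
  · change IsClosed (Set.range E)
    rw [hrange]
    refine isClosed_biInter fun V _ => isClosed_eq ?_ continuous_const
    exact ((a.flip V).mkContinuous (C * ‖V‖) fun x => (hC x V).trans_eq (by ring)).continuous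
  · ext V
    simp only [Set.forall_mem_range, Set.mem_ofPred_eq]
    refine ⟨fun h => ?_, fun hV w => haB w V hV⟩
    rw [← inner_self_eq_zero (𝕜 := ℝ), ← hE]
    exact h _
  · obtain ⟨w, hw⟩ := hdecomp U
    refine ⟨(E w, U - E w), ⟨⟨w, rfl⟩, hw, (add_sub_cancel _ _).symm⟩, ?_⟩
    rintro ⟨_, V⟩ ⟨⟨z, rfl⟩, hV, hU⟩
    dsimp only at hV hU
    have hd : B (E z - E w) = 0 := by
      rw [hU, add_sub_right_comm, map_add, hV, add_zero] at hw
      exact hw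
    have h : E z = E w := sub_eq_zero.1 <| eq_zero _ <| by
      rw [LinearMap.map_sub₂, haB _ _ hd, haB _ _ hd, sub_zero]
    rw [hU, h, add_sub_cancel_left]
  · rintro ⟨_, V⟩ ⟨w, rfl⟩ hV -
    exact haB w V hV
end
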